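/- arXiv:2304.00710 — 3 statements merged into one kernel-verified Lean document; each statement's English description precedes it below -/
import Mathlib

section
/- For all nonzero complex numbers α, β, δ, the matrix X₁ satisfies the (2,3,2)-generalized Yang–Baxter equation (X₁ ⊗ I₄)(I₄ ⊗ X₁)(X₁ ⊗ I₄) = (I₄ ⊗ X₁)(X₁ ⊗ I₄)(I₄ ⊗ X₁). -/
/-!
`X₁` is supported on the diagonal and the antidiagonal, so it acts on a vector by
`(X₁ g) p = X₁ p p * g p + X₁ p p' * g p'`, where `p' = 7 - p` is `p` with its three bits flipped.
Hence `X₁ ⊗ I₄` and `I₄ ⊗ X₁` act on `f : Fin 32 → ℂ` by two-term formulas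
(`left_mulVec`, `right_mulVec`) that flip the top three, respectively the bottom three, of the
five bits of the index. Applying each side of the equation to an arbitrary `f`, the value at each
of the 32 indices is a combination of the four values of `f` on the orbit of that index under the
two commuting flips, and the coefficients agree as rational functions of `α, β, δ`.
-/

open Matrix
open scoped Kronecker

/-- The `(2,3,2)`-generalized Yang–Baxter equation for an `8 × 8` complex matrix acting on
`(ℂ²)^{⊗3}`: `(R ⊗ I₄)(I₄ ⊗ R)(R ⊗ I₄) = (I₄ ⊗ R)(R ⊗ I₄)(I₄ ⊗ R)`, both sides identified
as `32 × 32` matrices via the canonical reindexing. -/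
noncomputable def gYBE232 (R : Matrix (Fin 8) (Fin 8) ℂ) : Prop :=
  let e₁ : Fin 8 × Fin 4 ≃ Fin 32 := finProdFinEquiv.trans (finCongr (by norm_num))
  let e₂ : Fin 4 × Fin 8 ≃ Fin 32 := finProdFinEquiv.trans (finCongr (by norm_num))
  let A := Matrix.reindex e₁ e₁ (R ⊗ₖ (1 : Matrix (Fin 4) (Fin 4) ℂ))
  let B := Matrix.reindex e₂ e₂ ((1 : Matrix (Fin 4) (Fin 4) ℂ) ⊗ₖ R)
  A * B * A = B * A * B

/-- The X-shaped matrix `X₁` with parameters `α, β, δ`. -/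
noncomputable def X1 (α β δ : ℂ) : Matrix (Fin 8) (Fin 8) ℂ :=
  !![δ, 0, 0, 0, 0, 0, 0, α * β ^ 2 / δ ^ 2;
     0, 1, 0, 0, 0, 0, β, 0;
     0, 0, δ, 0, 0, α, 0, 0;
     0, 0, 0, 1, δ ^ 2 / β, 0, 0, 0;
     0, 0, 0, β, 1, 0, 0, 0;
     0, 0, 1 / α, 0, 0, δ, 0, 0;
     0, δ ^ 2 / β, 0, 0, 0, 0, 1, 0;
     δ ^ 2 / (α * β ^ 2), 0, 0, 0, 0, 0, 0, δ]

/-- A row of `X₁` has at most two nonzero entries: the diagonal and the antidiagonal one. -/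
lemma X1_row_sum (α β δ : ℂ) (g : Fin 8 → ℂ) (p : Fin 8) :
    ∑ p', X1 α β δ p p' * g p' = X1 α β δ p p * g p + X1 α β δ p p.rev * g p.rev := by
  fin_cases p <;> simp [X1, Fin.sum_univ_eight, Fin.rev] <;> ring

/-- Action of `X₁ ⊗ I₄`; the index `4 p + q` is sent to `4 (7 - p) + q`. -/
lemma left_mulVec (α β δ : ℂ) (e : Fin 8 × Fin 4 ≃ Fin 32)
    (he : ∀ p q, (e (p, q) : ℕ) = q + 4 * p) (f : Fin 32 → ℂ) (p : Fin 8) (q : Fin 4) :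
    (Matrix.reindex e e (X1 α β δ ⊗ₖ (1 : Matrix (Fin 4) (Fin 4) ℂ)) *ᵥ f)
        ⟨q + 4 * p, by omega⟩ =
      X1 α β δ p p * f ⟨q + 4 * p, by omega⟩ +
        X1 α β δ p p.rev * f ⟨q + 4 * p.rev, by omega⟩ := by
  have h (p : Fin 8) (q : Fin 4) (h) : (⟨q + 4 * p, h⟩ : Fin 32) = e (p, q) := Fin.ext (he p q).symm
  simp only [h, Matrix.mulVec, dotProduct]
  rw [← e.sum_comp, Fintype.sum_prod_type, ← X1_row_sum α β δ (fun p => f (e (p, q)))]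
  simp [Matrix.one_apply]

/-- Action of `I₄ ⊗ X₁`; the index `8 q + p` is sent to `8 q + (7 - p)`. -/
lemma right_mulVec (α β δ : ℂ) (e : Fin 4 × Fin 8 ≃ Fin 32)
    (he : ∀ q p, (e (q, p) : ℕ) = p + 8 * q) (f : Fin 32 → ℂ) (p : Fin 8) (q : Fin 4) :
    (Matrix.reindex e e ((1 : Matrix (Fin 4) (Fin 4) ℂ) ⊗ₖ X1 α β δ) *ᵥ f)
        ⟨p + 8 * q, by omega⟩ =
      X1 α β δ p p * f ⟨p + 8 * q, by omega⟩ +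
        X1 α β δ p p.rev * f ⟨p.rev + 8 * q, by omega⟩ := by
  have h (p : Fin 8) (q : Fin 4) (h) : (⟨p + 8 * q, h⟩ : Fin 32) = e (q, p) := Fin.ext (he q p).symm
  simp only [h, Matrix.mulVec, dotProduct]
  rw [← e.sum_comp, Fintype.sum_prod_type_right, ← X1_row_sum α β δ (fun p => f (e (q, p)))]
  simp [Matrix.one_apply]

/-- For all nonzero `α, β, δ`, the matrix `X₁` solves the `(2,3,2)`-gYBE. -/
theorem X1_gYBE (α β δ : ℂ) (hα : α ≠ 0) (hβ : β ≠ 0) (hδ : δ ≠ 0) :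
    gYBE232 (X1 α β δ) := by
  unfold gYBE232
  intro e₁ e₂ A B
  have hA := left_mulVec α β δ e₁ (fun _ _ => rfl)
  have hB := right_mulVec α β δ e₂ (fun _ _ => rfl)
  change ∀ f p q, (A *ᵥ f) _ = _ at hA
  change ∀ f p q, (B *ᵥ f) _ = _ at hB
  clear_value A B
  have hA' : ∀ f i, (A *ᵥ f) i = X1 α β δ ⟨i / 4, by omega⟩ ⟨i / 4, by omega⟩ * f i +
      X1 α β δ ⟨i / 4, by omega⟩ ⟨7 - i / 4, by omega⟩ *
        f ⟨i % 4 + 4 * (7 - i / 4), by omega⟩ := by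
    intro f i
    have := hA f ⟨i / 4, by omega⟩ ⟨i % 4, by omega⟩
    simpa [Nat.mod_add_div, Fin.rev] using this
  have hB' : ∀ f i, (B *ᵥ f) i = X1 α β δ ⟨i % 8, by omega⟩ ⟨i % 8, by omega⟩ * f i +
      X1 α β δ ⟨i % 8, by omega⟩ ⟨7 - i % 8, by omega⟩ *
        f ⟨7 - i % 8 + 8 * (i / 8), by omega⟩ := by
    intro f i
    have := hB f ⟨i % 8, by omega⟩ ⟨i / 8, by omega⟩
    simpa [Nat.mod_add_div, Fin.rev] using this
  -- Matrices are compared by their action; the two sides agree on every vector `f`.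
  refine Matrix.ext_of_mulVec_single fun j => ?_
  generalize (Pi.single j 1 : Fin 32 → ℂ) = f
  simp only [← Matrix.mulVec_mulVec]
  ext i
  simp only [hA', hB']
  fin_cases i <;> simp [X1] <;> field_simp <;> ring
end

section
/- For all nonzero complex numbers α, β, the matrix X₂ satisfies the (2,3,2)-generalized Yang–Baxter equation (X₂ ⊗ I₄)(I₄ ⊗ X₂)(X₂ ⊗ I₄) = (I₄ ⊗ X₂)(X₂ ⊗ I₄)(I₄ ⊗ X₂). -/
/-!
The diagonal entries of `X2 α β` are `1` and `-i`, so `X2 α β = (1-i)/2 + (1+i)/2 • Z + N`,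
where `Z` is the diagonal sign matrix `-σ_z ⊗ σ_z ⊗ σ_z` and `N` is the antidiagonal part.
Write `Zₖ`, `Nₖ` for the two embeddings (`k = 1, 2`) into
`32 × 32` matrices. They overlap in one tensor factor and satisfy

* `Zₖ² = 1`, `Z₁ Z₂ = Z₂ Z₁`, `Nₖ² = i`, and `Nₖ Zₗ = - Zₗ Nₖ` for all `k, l`;
* `N₁ N₂ = Z₁ Z₂ N₂ N₁`.

These relations alone imply the braid relation (`braid_of_relations`). As every matrix in them is
monomial, each relation reduces to an identity between coefficients, checked index by index.
-/

open Matrix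
open scoped Kronecker

/-- The X-shaped matrix `X₂` with parameters `α, β`. -/
noncomputable def X2 (α β : ℂ) : Matrix (Fin 8) (Fin 8) ℂ :=
  !![-Complex.I, 0, 0, 0, 0, 0, 0, Complex.I * α * β ^ 2;
     0, 1, 0, 0, 0, 0, β, 0;
     0, 0, 1, 0, 0, α, 0, 0;
     0, 0, 0, -Complex.I, Complex.I / β, 0, 0, 0;
     0, 0, 0, β, 1, 0, 0, 0;
     0, 0, Complex.I / α, 0, 0, -Complex.I, 0, 0;
     0, Complex.I / β, 0, 0, 0, 0, -Complex.I, 0;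
     1 / (α * β ^ 2), 0, 0, 0, 0, 0, 0, 1]

section Algebra

/-- The braid relation in an arbitrary complex algebra; `z, w, m, n` play the roles of
`Z₁, Z₂, N₁, N₂`. With `a = (1-i)/2`, `g = (1+i)/2`, `T = g z + m` and `S = g w + n`, one has
`T² = S² = 3i/2` and `TST - STS = a² (S - T)`;
expanding `A = a + T` and `B = a + S` then gives the claim. -/
theorem braid_of_relations {R : Type*} [Ring R] [Algebra ℂ R] (z w m n : R)
    (hz : z * z = 1) (hw : w * w = 1) (hwz : w * z = z * w)
    (hm : m * m = Complex.I • 1) (hn : n * n = Complex.I • 1)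
    (hmz : m * z = -(z * m)) (hmw : m * w = -(w * m))
    (hnz : n * z = -(z * n)) (hnw : n * w = -(w * n))
    (hmn : m * n = z * w * (n * m)) (A B : R)
    (hA : A = ((1 - Complex.I) / 2) • 1 + ((1 + Complex.I) / 2) • z + m)
    (hB : B = ((1 - Complex.I) / 2) • 1 + ((1 + Complex.I) / 2) • w + n) :
    A * B * A = B * A * B := by
  have hz' (x : R) : z * (z * x) = x := by rw [← mul_assoc, hz, one_mul]
  have hw' (x : R) : w * (w * x) = x := by rw [← mul_assoc, hw, one_mul]
  have hwz' (x : R) : w * (z * x) = z * (w * x) := by rw [← mul_assoc, hwz, mul_assoc]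
  have hn' (x : R) : n * (n * x) = Complex.I • x := by
    rw [← mul_assoc, hn, smul_mul_assoc, one_mul]
  have hnz' (x : R) : n * (z * x) = -(z * (n * x)) := by
    rw [← mul_assoc, hnz, neg_mul, mul_assoc]
  have hnw' (x : R) : n * (w * x) = -(w * (n * x)) := by
    rw [← mul_assoc, hnw, neg_mul, mul_assoc]
  rw [mul_assoc] at hmn
  subst hA hB
  -- The relations rewrite every word to the normal form `z^a w^b n^c m^d`.
  simp only [mul_add, add_mul, smul_mul_assoc, mul_smul_comm, mul_assoc, one_mul, mul_one,
    mul_neg, neg_mul, smul_neg, neg_neg, hz, hw, hwz, hm, hn, hmz, hmw, hnz, hnw, hmn,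
    hz', hw', hwz', hn', hnz', hnw']
  have hI : Complex.I ^ 2 = -1 := Complex.I_sq
  match_scalars <;> grind

end Algebra

section Monomial

variable {n : Type*} [DecidableEq n]

/-- The monomial matrix whose row `i` has the entry `c i` in column `s i` and zeros elsewhere. -/
def monomial (c : n → ℂ) (s : n → n) : Matrix n n ℂ :=
  Matrix.of fun i j => if j = s i then c i else 0

theorem monomial_mul [Fintype n] (c d : n → ℂ) (s t : n → n) :
    monomial c s * monomial d t = monomial (fun i => c i * d (s i)) (fun i => t (s i)) := by
  ext i k
  simp only [monomial, Matrix.mul_apply, Matrix.of_apply]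
  rw [Finset.sum_eq_single (s i)] <;> simp +contextual

theorem monomial_neg (c : n → ℂ) (s : n → n) :
    -monomial c s = monomial (fun i => -c i) s := by
  ext i k
  simp only [monomial, Matrix.neg_apply, Matrix.of_apply]
  split_ifs <;> simp

theorem smul_one_eq_monomial (r : ℂ) :
    r • (1 : Matrix n n ℂ) = monomial (fun _ => r) (fun i => i) := by
  ext i k
  simp [monomial, Matrix.one_apply, eq_comm]

theorem monomial_congr {c d : n → ℂ} {s t : n → n} (hc : ∀ i, c i = d i) (hs : ∀ i, s i = t i) :
    monomial c s = monomial d t := by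
  rw [funext hc, funext hs]

end Monomial

open Complex (I)

/-- The diagonal of `-σ_z ⊗ σ_z ⊗ σ_z`. -/
def sgn : Fin 8 → ℂ := ![-1, 1, 1, -1, 1, -1, -1, 1]

/-- The antidiagonal entries of `X2 α β`, listed by row. -/
noncomputable def anti (α β : ℂ) : Fin 8 → ℂ :=
  ![I * α * β ^ 2, β, α, I / β, β, I / α, I / β, 1 / (α * β ^ 2)]

theorem X2_eq (α β : ℂ) : X2 α β = ((1 - I) / 2) • (1 : Matrix (Fin 8) (Fin 8) ℂ)
    + ((1 + I) / 2) • monomial sgn id + monomial (anti α β) Fin.rev := by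
  ext i j
  fin_cases i <;> fin_cases j <;>
    simp [X2, monomial, sgn, anti, Fin.rev] <;> ring

/-- The splitting of an index of `(ℂ²)^{⊗5}` into its first three and its last two bits. -/
def splitL : Fin 8 × Fin 4 ≃ Fin 32 := finProdFinEquiv.trans (finCongr (by norm_num))

/-- The splitting of an index of `(ℂ²)^{⊗5}` into its first two and its last three bits. -/
def splitR : Fin 4 × Fin 8 ≃ Fin 32 := finProdFinEquiv.trans (finCongr (by norm_num))

/-- The index `i` with its first three bits flipped. -/
def flipL (i : Fin 32) : Fin 32 := splitL ((splitL.symm i).1.rev, (splitL.symm i).2)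

/-- The index `i` with its last three bits flipped. -/
def flipR (i : Fin 32) : Fin 32 := splitR ((splitR.symm i).1, (splitR.symm i).2.rev)

theorem reindex_splitL (c : Fin 8 → ℂ) (s : Fin 8 → Fin 8) :
    Matrix.reindex splitL splitL (monomial c s ⊗ₖ (1 : Matrix (Fin 4) (Fin 4) ℂ)) =
      monomial (fun i => c (splitL.symm i).1)
        (fun i => splitL (s (splitL.symm i).1, (splitL.symm i).2)) := by
  ext i j
  simp only [monomial, Matrix.reindex_apply, Matrix.submatrix_apply, Matrix.kroneckerMap_apply,
    Matrix.of_apply, Matrix.one_apply, ← Equiv.symm_apply_eq, Prod.ext_iff]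
  grind

theorem reindex_splitR (c : Fin 8 → ℂ) (s : Fin 8 → Fin 8) :
    Matrix.reindex splitR splitR ((1 : Matrix (Fin 4) (Fin 4) ℂ) ⊗ₖ monomial c s) =
      monomial (fun i => c (splitR.symm i).2)
        (fun i => splitR ((splitR.symm i).1, s (splitR.symm i).2)) := by
  ext i j
  simp only [monomial, Matrix.reindex_apply, Matrix.submatrix_apply, Matrix.kroneckerMap_apply,
    Matrix.of_apply, Matrix.one_apply, ← Equiv.symm_apply_eq, Prod.ext_iff]
  grind

theorem sgn_mul_self (k : Fin 8) : sgn k * sgn k = 1 := by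
  fin_cases k <;> simp [sgn]

theorem sgn_rev (k : Fin 8) : sgn k.rev = -sgn k := by
  fin_cases k <;> simp [sgn, Fin.rev]

theorem anti_mul_rev {α β : ℂ} (hα : α ≠ 0) (hβ : β ≠ 0) (k : Fin 8) :
    anti α β k * anti α β k.rev = I := by
  fin_cases k <;> simp [anti, Fin.rev] <;> field_simp

/-- Flipping the last three bits changes exactly one of the first three. -/
theorem sgn_flipR (i : Fin 32) :
    sgn (splitL.symm (flipR i)).1 = -sgn (splitL.symm i).1 := by
  fin_cases i <;>
    simp [sgn, flipR, splitL, splitR, finProdFinEquiv, Fin.divNat, Fin.modNat, Fin.rev]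

/-- Flipping the first three bits changes exactly one of the last three. -/
theorem sgn_flipL (i : Fin 32) :
    sgn (splitR.symm (flipL i)).2 = -sgn (splitR.symm i).2 := by
  fin_cases i <;>
    simp [sgn, flipL, splitL, splitR, finProdFinEquiv, Fin.divNat, Fin.modNat, Fin.rev]

/-- The coefficients of `N₁ N₂ = Z₁ Z₂ N₂ N₁`. -/
theorem anti_flip {α β : ℂ} (hα : α ≠ 0) (hβ : β ≠ 0) (i : Fin 32) :
    anti α β (splitL.symm i).1 * anti α β (splitR.symm (flipL i)).2 =
      sgn (splitL.symm i).1 * sgn (splitR.symm i).2 *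
        (anti α β (splitR.symm i).2 * anti α β (splitL.symm (flipR i)).1) := by
  have hI : I ^ 2 = -1 := Complex.I_sq
  fin_cases i <;>
    simp [anti, sgn, flipL, flipR, splitL, splitR, finProdFinEquiv, Fin.divNat, Fin.modNat,
      Fin.rev] <;>
    field_simp <;> simp [hI]

/-- For all nonzero `α, β`, the matrix `X₂` solves the `(2,3,2)`-gYBE. -/
theorem X2_gYBE (α β : ℂ) (hα : α ≠ 0) (hβ : β ≠ 0) : gYBE232 (X2 α β) := by
  have hL : ∀ i, flipL (flipL i) = i := by decide
  have hR : ∀ i, flipR (flipR i) = i := by decide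
  have hLR : ∀ i, flipR (flipL i) = flipL (flipR i) := by decide
  have hL1 (i) : (splitL.symm (flipL i)).1 = (splitL.symm i).1.rev := by simp [flipL]
  have hR2 (i) : (splitR.symm (flipR i)).2 = (splitR.symm i).2.rev := by simp [flipR]
  have one_eq : (1 : Matrix (Fin 32) (Fin 32) ℂ) = monomial (fun _ => 1) (fun i => i) := by
    rw [← smul_one_eq_monomial, one_smul]
  refine braid_of_relations
    (monomial (fun i => sgn (splitL.symm i).1) (fun i => i))
    (monomial (fun i => sgn (splitR.symm i).2) (fun i => i))
    (monomial (fun i => anti α β (splitL.symm i).1) flipL)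
    (monomial (fun i => anti α β (splitR.symm i).2) flipR)
    ?_ ?_ ?_ ?_ ?_ ?_ ?_ ?_ ?_ ?_ _ _ ?_ ?_
  iterate 2
    rw [monomial_mul, one_eq]
    exact monomial_congr (fun _ => sgn_mul_self _) (fun _ => rfl)
  · rw [monomial_mul, monomial_mul]
    exact monomial_congr (fun _ => mul_comm _ _) (fun _ => rfl)
  · rw [monomial_mul, smul_one_eq_monomial]
    exact monomial_congr (fun i => by rw [hL1, anti_mul_rev hα hβ]) hL
  · rw [monomial_mul, smul_one_eq_monomial]
    exact monomial_congr (fun i => by rw [hR2, anti_mul_rev hα hβ]) hR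
  · rw [monomial_mul, monomial_mul, monomial_neg]
    exact monomial_congr (fun i => by rw [hL1, sgn_rev]; ring) (fun _ => rfl)
  · rw [monomial_mul, monomial_mul, monomial_neg]
    exact monomial_congr (fun i => by rw [sgn_flipL]; ring) (fun _ => rfl)
  · rw [monomial_mul, monomial_mul, monomial_neg]
    exact monomial_congr (fun i => by rw [sgn_flipR]; ring) (fun _ => rfl)
  · rw [monomial_mul, monomial_mul, monomial_neg]
    exact monomial_congr (fun i => by rw [hR2, sgn_rev]; ring) (fun _ => rfl)
  · simp only [monomial_mul]
    exact monomial_congr (anti_flip hα hβ) hLR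
  · change Matrix.reindex splitL splitL (X2 α β ⊗ₖ 1) = _
    rw [X2_eq, Matrix.add_kronecker, Matrix.add_kronecker, Matrix.smul_kronecker,
      Matrix.smul_kronecker, Matrix.one_kronecker_one]
    have h₁ := reindex_splitL sgn id
    have h₂ := reindex_splitL (anti α β) Fin.rev
    simp only [id, Prod.mk.eta, Equiv.apply_symm_apply] at h₁
    change _ = monomial _ flipL at h₂
    rw [← h₁, ← h₂]
    simp [Matrix.submatrix_add, Matrix.submatrix_smul]
  · change Matrix.reindex splitR splitR (1 ⊗ₖ X2 α β) = _
    rw [X2_eq, Matrix.kronecker_add, Matrix.kronecker_add, Matrix.kronecker_smul,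
      Matrix.kronecker_smul, Matrix.one_kronecker_one]
    have h₁ := reindex_splitR sgn id
    have h₂ := reindex_splitR (anti α β) Fin.rev
    simp only [id, Prod.mk.eta, Equiv.apply_symm_apply] at h₁
    change _ = monomial _ flipR at h₂
    rw [← h₁, ← h₂]
    simp [Matrix.submatrix_add, Matrix.submatrix_smul]
end

section
/- For all nonzero complex numbers α, β, δ with δ² − 2δ + 2 ≠ 0, the matrix X₄ satisfies the (2,3,2)-generalized Yang–Baxter equation (X₄ ⊗ I₄)(I₄ ⊗ X₄)(X₄ ⊗ I₄) = (I₄ ⊗ X₄)(X₄ ⊗ I₄)(I₄ ⊗ X₄). -/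
open Matrix
open scoped Kronecker

/-- The X-shaped matrix `X₄` with parameters `α, β, δ` (writing `f = δ² − 2δ + 2`). -/
noncomputable def X4 (α β δ : ℂ) : Matrix (Fin 8) (Fin 8) ℂ :=
  !![2 - δ, 0, 0, 0, 0, 0, 0, α * β ^ 2 / (δ ^ 2 - 2 * δ + 2);
     0, 1, 0, 0, 0, 0, β, 0;
     0, 0, 2 - δ, 0, 0, α, 0, 0;
     0, 0, 0, 1, (δ ^ 2 - 2 * δ + 2) / β, 0, 0, 0;
     0, 0, 0, β, 1, 0, 0, 0;
     0, 0, 1 / α, 0, 0, δ, 0, 0;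
     0, (δ ^ 2 - 2 * δ + 2) / β, 0, 0, 0, 0, 1, 0;
     (δ ^ 2 - 2 * δ + 2) / (α * β ^ 2), 0, 0, 0, 0, 0, 0, δ]

/-!
`X4` has nonzero entries only on the diagonal and the antidiagonal, so `(X4 *ᵥ w) a` involves just
`w a` and `w a.rev`. Hence `X4 ⊗ I₄` and `I₄ ⊗ X4` mix a coordinate of a vector in `ℂ³²` only with
one other, obtained by flipping the first three, respectively the last three, of the five bits of
the index (`mulVec_left`, `mulVec_right`). These two flips commute, so each coordinate of
`A B A v = B A B v` involves at most four coordinates of `v`, and comparing their coefficients is a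
rational identity in `α, β, δ`.
-/

/-- The diagonal of `X4`. -/
noncomputable def X4diag (δ : ℂ) : Fin 8 → ℂ :=
  ![2 - δ, 1, 2 - δ, 1, 1, δ, 1, δ]

/-- The antidiagonal of `X4`, listed by row. -/
noncomputable def X4anti (α β δ : ℂ) : Fin 8 → ℂ :=
  ![α * β ^ 2 / (δ ^ 2 - 2 * δ + 2), β, α, (δ ^ 2 - 2 * δ + 2) / β, β, 1 / α,
    (δ ^ 2 - 2 * δ + 2) / β, (δ ^ 2 - 2 * δ + 2) / (α * β ^ 2)]

lemma X4_mulVec (α β δ : ℂ) (w : Fin 8 → ℂ) (a : Fin 8) :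
    ∑ a', X4 α β δ a a' * w a' = X4diag δ a * w a + X4anti α β δ a * w a.rev := by
  fin_cases a <;> simp [X4, X4diag, X4anti, Fin.sum_univ_eight, Fin.rev, add_comm]

/-- The first three bits of a five-bit index. -/
def hi3 (i : Fin 32) : Fin 8 := ⟨i / 4, by omega⟩

/-- The last three bits of a five-bit index. -/
def lo3 (i : Fin 32) : Fin 8 := ⟨i % 8, by omega⟩

/-- Flip the first three bits of a five-bit index. -/
def flipHi (i : Fin 32) : Fin 32 := ⟨4 * (7 - i / 4) + i % 4, by omega⟩

/-- Flip the last three bits of a five-bit index. -/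
def flipLo (i : Fin 32) : Fin 32 := ⟨8 * (i / 8) + (7 - i % 8), by omega⟩

lemma mulVec_left (α β δ : ℂ) (e : Fin 8 × Fin 4 ≃ Fin 32)
    (he : ∀ p, (e p : ℕ) = p.2 + 4 * p.1) (v : Fin 32 → ℂ) (i : Fin 32) :
    (Matrix.reindex e e (X4 α β δ ⊗ₖ (1 : Matrix (Fin 4) (Fin 4) ℂ)) *ᵥ v) i
      = X4diag δ (hi3 i) * v i + X4anti α β δ (hi3 i) * v (flipHi i) := by
  obtain ⟨⟨a, b⟩, rfl⟩ := e.surjective i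
  have hhi : hi3 (e (a, b)) = a := by
    ext; simp only [hi3, he]; omega
  have hflip : flipHi (e (a, b)) = e (a.rev, b) := by
    ext; simp only [flipHi, he, Fin.val_rev]; omega
  rw [hhi, hflip, ← X4_mulVec α β δ (fun a' => v (e (a', b)))]
  simp [Matrix.mulVec, dotProduct, ← e.sum_comp, Fintype.sum_prod_type, Matrix.one_apply]

lemma mulVec_right (α β δ : ℂ) (e : Fin 4 × Fin 8 ≃ Fin 32)
    (he : ∀ p, (e p : ℕ) = p.2 + 8 * p.1) (v : Fin 32 → ℂ) (i : Fin 32) :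
    (Matrix.reindex e e ((1 : Matrix (Fin 4) (Fin 4) ℂ) ⊗ₖ X4 α β δ) *ᵥ v) i
      = X4diag δ (lo3 i) * v i + X4anti α β δ (lo3 i) * v (flipLo i) := by
  obtain ⟨⟨b, a⟩, rfl⟩ := e.surjective i
  have hlo : lo3 (e (b, a)) = a := by
    ext; simp only [lo3, he]; omega
  have hflip : flipLo (e (b, a)) = e (b, a.rev) := by
    ext; simp only [flipLo, he, Fin.val_rev]; omega
  rw [hlo, hflip, ← X4_mulVec α β δ (fun a' => v (e (b, a')))]
  simp [Matrix.mulVec, dotProduct, ← e.sum_comp, Fintype.sum_prod_type_right, Matrix.one_apply]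

/-- For all nonzero `α, β, δ` with `δ² − 2δ + 2 ≠ 0`, the matrix `X₄` solves the
`(2,3,2)`-gYBE. -/
theorem X4_gYBE (α β δ : ℂ) (hα : α ≠ 0) (hβ : β ≠ 0) (hδ : δ ≠ 0)
    (hf : δ ^ 2 - 2 * δ + 2 ≠ 0) : gYBE232 (X4 α β δ) := by
  unfold gYBE232
  intro e₁ e₂ A B
  have hA : ∀ v i, (A *ᵥ v) i = X4diag δ (hi3 i) * v i + X4anti α β δ (hi3 i) * v (flipHi i) :=
    mulVec_left α β δ e₁ (fun p => by simp [e₁, finProdFinEquiv])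
  have hB : ∀ v i, (B *ᵥ v) i = X4diag δ (lo3 i) * v i + X4anti α β δ (lo3 i) * v (flipLo i) :=
    mulVec_right α β δ e₂ (fun p => by simp [e₂, finProdFinEquiv])
  refine Matrix.ext_iff_mulVec.mpr fun v => ?_
  simp only [← Matrix.mulVec_mulVec]
  funext i
  simp only [hA, hB]
  simp only [X4diag, X4anti]
  -- Keeping `f` opaque while clearing denominators lets `hf` match them syntactically.
  generalize hF : δ ^ 2 - 2 * δ + 2 = f at hf ⊢
  fin_cases i <;>
    simp [hi3, lo3, flipHi, flipLo] <;>
    field_simp <;> rw [← hF] <;> ring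
end
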